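/- Let Ω ⊂ ℝⁿ be a bounded open domain, q > 1 and a < q−1, and let δ(x) = dist(x, ∂Ω). Assume the weighted Hardy inequality ∫_Ω (|u(x)|/δ(x))^q·δ(x)^a dx ≤ C·∫_Ω |∇u(x)|^q·δ(x)^a dx for every u ∈ C₀^∞(Ω) (which holds, by Necas's theorem, whenever Ω is a bounded Lipschitz domain). If M and Q are N-functions such that (M(u)/u²)·v·w ≤ M(u) + c·v^q + Q(w) for all u, v, w > 0, and M satisfies condition (M), then there exists a constant c' > 0 independent of u such that for every u ∈ C₀^∞(Ω): ∫_Ω M(|∇u(x)|)·δ(x)^a dx ≤ c'·( ∫_Ω |∇⁽²⁾u(x)|^q·δ(x)^a dx + ∫_Ω Q(|u(x)|)·δ(x)^a dx ). -/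

import Mathlib

/-!
Write `G = ∇u`. Since `M(|G|) = ∑ᵢ (M(|G|) / |G|²) ∂ᵢu ∂ᵢu`, integrating by parts in each direction
bounds `∫ M(|G|) δ^a` by integrals of `|u| (M(|G|) / |G|²) |∇²u| δ^a` and of
`|a| |u| (M(|G|) / |G|²) (|∂ᵢu| / δ) δ^a`. Here `l |M'(l)| ≤ L M(l)`, a consequence of convexity and
Δ₂ (`CondM.exists_deriv_mul_le`), controls the derivative of the factor `M(|G|) / |G|²`, and `δ` is
`1`-Lipschitz. The Young-type hypothesis, rescaled in `v` (`reg_young`), bounds both by a small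
multiple of `M(|G|)`, which is absorbed on the left, plus `|∇²u|^q`, `(|∂ᵢu| / δ)^q` and `Q(|u|)`.
The Hardy inequality applied to `∂ᵢu` turns `(|∂ᵢu| / δ)^q` into `|∇²u|^q`.

Two regularizations make the integration by parts legitimate (`ibp_bound`). The factor
`M(|G|) / |G|²` is replaced by `M(|G|) / (|G|² + e)`, which is differentiable also where `G = 0`
since `M(l) = o(l)`, satisfies the same bounds uniformly in `e`, and leads back to `M(|G|)` by
dominated convergence as `e → 0`. The weight `δ^a` is replaced, away from the support of `u`, by a
globally Lipschitz function (`exists_lipschitz_weight`), differentiable almost everywhere by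
Rademacher's theorem.
-/

open MeasureTheory Filter Set

noncomputable section

/-- `E n` is the Euclidean space `ℝⁿ`. -/
abbrev E (n : ℕ) := EuclideanSpace ℝ (Fin n)

/-- An `N`-function: a continuous convex function `M : [0,∞) → [0,∞)` with `M(0) = 0`,
`lim_{λ→0} M(λ)/λ = 0` and `lim_{λ→∞} λ/M(λ) = 0`. -/
def IsNFunction (M : ℝ → ℝ) : Prop :=
  ContinuousOn M (Ici 0) ∧ ConvexOn ℝ (Ici 0) M ∧ M 0 = 0 ∧
  (∀ x ≥ (0:ℝ), 0 ≤ M x) ∧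
  Tendsto (fun l => M l / l) (nhdsWithin 0 (Ioi 0)) (nhds 0) ∧
  Tendsto (fun l => l / M l) atTop (nhds 0)

/-- The Δ₂-condition. -/
def Delta2 (M : ℝ → ℝ) : Prop := ∃ c > 0, ∀ l > (0:ℝ), M (2 * l) ≤ c * M l

/-- Condition (M): `M` is an `N`-function of class `C¹` on `(0,∞)` satisfying the
Δ₂-condition and such that `M'(λ)/λ` is bounded near zero. -/
def CondM (M : ℝ → ℝ) : Prop :=
  IsNFunction M ∧ ContDiffOn ℝ 1 M (Ioi 0) ∧ Delta2 M ∧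
  ∃ ε > (0:ℝ), ∃ C : ℝ, ∀ l ∈ Ioo (0:ℝ) ε, deriv M l / l ≤ C

/-- Condition (Y): `P, Q` are nonnegative nondecreasing measurable functions vanishing at `0`
such that the Young-type inequality `(M(u)/u²)·v·w ≤ M(u) + P(v) + Q(w)` holds. -/
def CondY (M P Q : ℝ → ℝ) : Prop :=
  Measurable P ∧ Measurable Q ∧ (∀ x ≥ (0:ℝ), 0 ≤ P x) ∧ (∀ x ≥ (0:ℝ), 0 ≤ Q x) ∧
  MonotoneOn P (Ici 0) ∧ MonotoneOn Q (Ici 0) ∧ P 0 = 0 ∧ Q 0 = 0 ∧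
  ∀ u > (0:ℝ), ∀ v > (0:ℝ), ∀ w > (0:ℝ), M u / u ^ 2 * v * w ≤ M u + P v + Q w

/-- `φ` is locally Lipschitz on `Ω`. -/
def LocLipschitzOn {α : Type*} [MetricSpace α] (Ω : Set α) (φ : α → ℝ) : Prop :=
  ∀ x ∈ Ω, ∃ s ∈ nhdsWithin x Ω, ∃ K : NNReal, LipschitzOnWith K φ s

/-- The measure `μ(dx) = e^{-φ(x)} dx` on the domain `Ω`. -/
def measOf {n : ℕ} (Ω : Set (E n)) (φ : E n → ℝ) : Measure (E n) :=
  (volume.restrict Ω).withDensity fun x => ENNReal.ofReal (Real.exp (-φ x))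

/-- `u ∈ C₀^∞(Ω)`: smooth and compactly supported inside `Ω`. -/
def TestFun {n : ℕ} (Ω : Set (E n)) (u : E n → ℝ) : Prop :=
  ContDiff ℝ (⊤ : ℕ∞) u ∧ HasCompactSupport u ∧ tsupport u ⊆ Ω

/-- The Hilbert–Schmidt norm of the Hessian of `u` at `x`. -/
def hessNormHS {n : ℕ} (u : E n → ℝ) (x : E n) : ℝ :=
  Real.sqrt (∑ i : Fin n, ∑ j : Fin n,
    (iteratedFDeriv ℝ 2 u x ![EuclideanSpace.single i (1:ℝ), EuclideanSpace.single j (1:ℝ)]) ^ 2)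

/-- The Luxemburg norm `‖f‖_{L^R(μ)} = inf {K > 0 : ∫ R(|f|/K) dμ ≤ 1}`. -/
def luxNorm {α : Type*} [MeasurableSpace α] (R : ℝ → ℝ) (μ : Measure α) (f : α → ℝ) : ℝ :=
  sInf {K : ℝ | 0 < K ∧ ∫ x, R (|f x| / K) ∂μ ≤ 1}

/-- `δ(x) = dist(x, ∂Ω)`, the distance from `x` to the boundary of `Ω`. -/
def distBdry {n : ℕ} (Ω : Set (E n)) (x : E n) : ℝ := Metric.infDist x (frontier Ω)

/-! ### The regularized factor -/

/-- The Δ₂-condition and convexity bound `M'` from above by the slope over `[l, 2l]`. -/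
theorem CondM.exists_deriv_mul_le {M : ℝ → ℝ} (hM : CondM M) :
    ∃ L : ℝ, 0 ≤ L ∧ (∀ l > (0:ℝ), DifferentiableAt ℝ M l) ∧
      ∀ l > (0:ℝ), |deriv M l| * l ≤ L * M l := by
  obtain ⟨⟨_, hconv, hM0, hpos, _, _⟩, hC1, ⟨c, hc, hd⟩, _⟩ := hM
  have hdiff : ∀ l > (0:ℝ), DifferentiableAt ℝ M l := fun l hl =>
    (hC1.differentiableOn (by norm_num)).differentiableAt (Ioi_mem_nhds hl)
  refine ⟨c, hc.le, hdiff, fun l hl => ?_⟩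
  have h1 := hconv.deriv_le_slope (x := l) (y := 2 * l) (mem_Ici.2 hl.le)
    (mem_Ici.2 (by linarith)) (by linarith) (hdiff l hl)
  have h2 := hconv.slope_le_deriv (x := 0) (y := l) (mem_Ici.2 le_rfl)
    (mem_Ici.2 hl.le) hl (hdiff l hl)
  rw [slope_def_field] at h1 h2
  have h3 : 0 ≤ deriv M l := by
    refine le_trans ?_ h2
    rw [hM0, sub_zero, sub_zero]
    exact div_nonneg (hpos l hl.le) hl.le
  rw [abs_of_nonneg h3]
  have h4 : (2 * l - l) = l := by ring
  rw [h4, le_div_iff₀ hl] at h1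
  linarith [hd l hl, hpos l hl.le]

/-- The function `p ↦ M(|p|) / (|p|² + e)`, a regularization at the origin of the factor
`M(|p|) / |p|²`. -/
def reg (M : ℝ → ℝ) (e : ℝ) {n : ℕ} (p : E n) : ℝ := M ‖p‖ / (‖p‖ ^ 2 + e)

theorem reg_nonneg {M : ℝ → ℝ} (hpos : ∀ x ≥ (0:ℝ), 0 ≤ M x) {e : ℝ} (he : 0 < e) {n : ℕ}
    (p : E n) : 0 ≤ reg M e p :=
  div_nonneg (hpos _ (norm_nonneg _)) (by positivity)

theorem reg_mul_sq_le {M : ℝ → ℝ} (hpos : ∀ x ≥ (0:ℝ), 0 ≤ M x) {e : ℝ} (he : 0 < e) {n : ℕ}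
    (p : E n) : reg M e p * ‖p‖ ^ 2 ≤ M ‖p‖ := by
  rw [reg, div_mul_eq_mul_div, div_le_iff₀ (by positivity)]
  nlinarith [hpos ‖p‖ (norm_nonneg _)]

/-- The regularized factor is differentiable everywhere: at the origin because
`M(l) = o(l)`, elsewhere by the chain rule.  The bound on the derivative comes from
`l |M'(l)| ≤ L M(l)`. -/
theorem reg_differentiableAt {M : ℝ → ℝ} (hN : IsNFunction M) {L : ℝ}
    (hdiff : ∀ l > (0:ℝ), DifferentiableAt ℝ M l)
    (hder : ∀ l > (0:ℝ), |deriv M l| * l ≤ L * M l) {e : ℝ} (he : 0 < e) {n : ℕ} (p : E n) :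
    DifferentiableAt ℝ (reg M e (n := n)) p ∧
      ‖fderiv ℝ (reg M e (n := n)) p‖ * ‖p‖ ≤ (L + 2) * reg M e p := by
  obtain ⟨_, _, hM0, hpos, hlim, _⟩ := hN
  by_cases hp : p = 0
  · subst hp
    have hd : HasFDerivAt (reg M e (n := n)) (0 : E n →L[ℝ] ℝ) 0 := by
      refine HasFDerivAt.of_isLittleO ?_
      simp only [reg, norm_zero, hM0, zero_div, sub_zero, _root_.zero_apply]
      rw [Asymptotics.isLittleO_iff]
      intro k hk
      have h1 : ∀ᶠ l in nhdsWithin (0:ℝ) (Ioi 0), M l / l < k * e :=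
        hlim.eventually_lt_const (by positivity)
      rw [eventually_nhdsWithin_iff] at h1
      have h2 : Tendsto (fun x : E n => ‖x‖) (nhds 0) (nhds 0) := by
        simpa using (continuous_norm (E := E n)).tendsto 0
      filter_upwards [h2.eventually h1] with x hx
      rw [Real.norm_eq_abs, abs_of_nonneg (div_nonneg (hpos _ (norm_nonneg _)) (by positivity)),
        div_le_iff₀ (by positivity)]
      rcases (norm_nonneg x).eq_or_lt with h0 | h0
      · rw [← h0, hM0]; positivity
      · have h3 := hx h0
        rw [div_lt_iff₀ h0] at h3
        have : 0 ≤ k * ‖x‖ * ‖x‖ ^ 2 := by positivity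
        nlinarith
    refine ⟨hd.differentiableAt, ?_⟩
    rw [hd.fderiv]
    simp [reg, hM0]
  · have hl : 0 < ‖p‖ := norm_pos_iff.2 hp
    set l := ‖p‖ with hldef
    have hn : DifferentiableAt ℝ (fun x : E n => ‖x‖) p :=
      DifferentiableAt.norm ℝ differentiableAt_id hp
    have hS : 0 < l ^ 2 + e := by positivity
    have hm : HasDerivAt (fun l : ℝ => M l / (l ^ 2 + e))
        ((deriv M l * (l ^ 2 + e) - M l * (2 * l)) / (l ^ 2 + e) ^ 2) l := by
      have h1 : HasDerivAt (fun l : ℝ => l ^ 2 + e) (2 * l) l := by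
        simpa using (hasDerivAt_pow 2 l).add_const e
      exact (hdiff l hl).hasDerivAt.div h1 hS.ne'
    have hd := HasDerivAt.comp_hasFDerivAt p (hldef ▸ hm) hn.hasFDerivAt
    have hd' : HasFDerivAt (reg M e (n := n)) _ p := hd
    refine ⟨hd'.differentiableAt, ?_⟩
    rw [hd'.fderiv, norm_smul, ← hldef, Real.norm_eq_abs]
    have hn1 : ‖fderiv ℝ (fun x : E n => ‖x‖) p‖ ≤ 1 := by
      simpa using norm_fderiv_le_of_lipschitz ℝ (x₀ := p) (lipschitzWith_one_norm (E := E n))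
    have hMl := hpos l hl.le
    have h2 : |(deriv M l * (l ^ 2 + e) - M l * (2 * l)) / (l ^ 2 + e) ^ 2| * l
        ≤ (L + 2) * (M l / (l ^ 2 + e)) := by
      rw [abs_div, abs_of_pos (pow_pos hS 2), div_mul_eq_mul_div, ← mul_div_assoc,
        div_le_div_iff₀ (by positivity) hS]
      have h3 : |deriv M l * (l ^ 2 + e) - M l * (2 * l)| ≤
          |deriv M l| * (l ^ 2 + e) + M l * (2 * l) := by
        refine (abs_sub _ _).trans ?_
        rw [abs_mul, abs_of_pos hS, abs_of_nonneg (by positivity : 0 ≤ M l * (2 * l))]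
      have h4 : |deriv M l * (l ^ 2 + e) - M l * (2 * l)| * l ≤
          (L + 2) * M l * (l ^ 2 + e) := by
        calc _ ≤ (|deriv M l| * (l ^ 2 + e) + M l * (2 * l)) * l := by gcongr
          _ = (|deriv M l| * l) * (l ^ 2 + e) + 2 * M l * l ^ 2 := by ring
          _ ≤ (L * M l) * (l ^ 2 + e) + 2 * M l * (l ^ 2 + e) := by
            have h5 := mul_le_mul_of_nonneg_right (hder l hl) hS.le
            have h6 := mul_nonneg hMl he.le
            linarith
          _ = _ := by ring
      calc _ ≤ (L + 2) * M l * (l ^ 2 + e) * (l ^ 2 + e) := by gcongr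
        _ = _ := by ring
    calc _ ≤ |(deriv M l * (l ^ 2 + e) - M l * (2 * l)) / (l ^ 2 + e) ^ 2| * 1 * l := by gcongr
      _ ≤ _ := by rw [mul_one]; exact h2

/-- The Young-type hypothesis for the regularized factor, with a constant `K` in front and an
arbitrarily small multiple of `M` on the right. -/
theorem reg_young {M Q : ℝ → ℝ} (hM0 : M 0 = 0) (hpos : ∀ x ≥ (0:ℝ), 0 ≤ M x)
    (hQpos : ∀ x ≥ (0:ℝ), 0 ≤ Q x) {c q : ℝ} (hc : 0 < c)
    (hY : ∀ u > (0:ℝ), ∀ v > (0:ℝ), ∀ w > (0:ℝ), M u / u ^ 2 * v * w ≤ M u + c * v ^ q + Q w)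
    {e : ℝ} (he : 0 < e) {n : ℕ} (p : E n) {K ε v w : ℝ} (hK : 0 ≤ K) (hε : 0 < ε)
    (hv : 0 ≤ v) (hw : 0 ≤ w) :
    K * (reg M e p * v * w) ≤ ε * (M ‖p‖ + c * (K / ε) ^ q * v ^ q + Q w) := by
  have hR : 0 ≤ ε * (M ‖p‖ + c * (K / ε) ^ q * v ^ q + Q w) := by
    have h1 := hpos ‖p‖ (norm_nonneg _)
    have h2 := hQpos w hw
    positivity
  rcases (norm_nonneg p).eq_or_lt with hp | hp
  · simp only [reg, ← hp, hM0, zero_div, zero_mul, mul_zero] at hR ⊢; exact hR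
  rcases hK.eq_or_lt with rfl | hK
  · simpa using hR
  rcases hv.eq_or_lt with rfl | hv
  · simpa using hR
  rcases hw.eq_or_lt with rfl | hw
  · simpa using hR
  have hMp := hpos ‖p‖ hp.le
  have h := hY ‖p‖ hp (K / ε * v) (by positivity) w hw
  rw [Real.mul_rpow (by positivity) hv.le] at h
  have h1 : reg M e p ≤ M ‖p‖ / ‖p‖ ^ 2 := by
    unfold reg; gcongr; linarith
  calc K * (reg M e p * v * w) = ε * (reg M e p * (K / ε * v) * w) := by field_simp
    _ ≤ ε * (M ‖p‖ / ‖p‖ ^ 2 * (K / ε * v) * w) := by gcongr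
    _ ≤ _ := by
      have : c * (K / ε) ^ q * v ^ q = c * ((K / ε) ^ q * v ^ q) := by ring
      rw [this]; gcongr

/-! ### The weight -/

/-- On a compact subset of `Ω` the weight `δ ^ a` agrees with a globally Lipschitz function,
obtained by truncating `δ` from below and above. -/
theorem exists_lipschitz_weight {n : ℕ} (Ω K : Set (E n)) (hK : IsCompact K)
    (hδ : ∀ x ∈ K, 0 < distBdry Ω x) (a : ℝ) :
    ∃ (ψ : E n → ℝ) (C : NNReal), LipschitzWith C ψ ∧ (∀ x ∈ K, ψ x = distBdry Ω x ^ a) ∧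
      ∀ v : E n, ∀ᵐ x, x ∈ K →
        |lineDeriv ℝ ψ x v| ≤ |a| * (distBdry Ω x ^ a / distBdry Ω x) * ‖v‖ := by
  have hlip : LipschitzWith 1 (distBdry Ω) := Metric.lipschitz_infDist_pt _
  obtain ⟨d, D, hd, hdD, hb⟩ :
      ∃ d D : ℝ, 0 < d ∧ d ≤ D ∧ ∀ x ∈ K, d < distBdry Ω x ∧ distBdry Ω x < D := by
    rcases K.eq_empty_or_nonempty with rfl | hne
    · exact ⟨1, 1, one_pos, le_rfl, by simp⟩
    obtain ⟨y, hy, hmin⟩ := hK.exists_isMinOn hne hlip.continuous.continuousOn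
    obtain ⟨z, hz, hmax⟩ := hK.exists_isMaxOn hne hlip.continuous.continuousOn
    have h0 := hδ y hy
    have hyz : distBdry Ω y ≤ distBdry Ω z := hmin hz
    refine ⟨distBdry Ω y / 2, distBdry Ω z + 1, by linarith, by linarith, fun x hx => ?_⟩
    have h1 : distBdry Ω y ≤ distBdry Ω x := hmin hx
    have h2 : distBdry Ω x ≤ distBdry Ω z := hmax hx
    constructor <;> linarith
  obtain ⟨C, hC⟩ : ∃ C, LipschitzOnWith C (fun t : ℝ => t ^ a) (Icc d D) := by
    refine ContDiffOn.exists_lipschitzOnWith (n := 1) ?_ (by norm_num) (convex_Icc d D)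
      isCompact_Icc
    exact contDiffOn_id.rpow_const_of_ne fun t ht => (hd.trans_le ht.1).ne'
  have hclamp : LipschitzWith 1 (fun x => max d (min (distBdry Ω x) D)) :=
    (hlip.min_const D).const_max d
  have hψ := hC.comp (hclamp.lipschitzOnWith (s := univ))
    (fun x _ => ⟨le_max_left _ _, max_le hdD (min_le_right _ _)⟩)
  rw [lipschitzOnWith_univ] at hψ
  have hloc : ∀ x, d < distBdry Ω x ∧ distBdry Ω x < D →
      max d (min (distBdry Ω x) D) = distBdry Ω x := fun x hx => by
    rw [min_eq_left hx.2.le, max_eq_right hx.1.le]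
  refine ⟨_, _, hψ, fun x hx => ?_, fun v => ?_⟩
  · simp only [Function.comp, hloc x (hb x hx)]
  filter_upwards [hlip.ae_differentiableAt (μ := volume)] with x hx hxK
  have hx0 := hδ x hxK
  have hev : ((fun t : ℝ => t ^ a) ∘ fun x => max d (min (distBdry Ω x) D))
      =ᶠ[nhds x] ((fun t : ℝ => t ^ a) ∘ distBdry Ω) := by
    filter_upwards [hlip.continuous.continuousAt.eventually (Ioo_mem_nhds (hb x hxK).1 (hb x hxK).2)]
      with y hy
    simp only [Function.comp, hloc y hy]
  have hder : HasFDerivAt ((fun t : ℝ => t ^ a) ∘ distBdry Ω) _ x :=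
    HasDerivAt.comp_hasFDerivAt x (Real.hasDerivAt_rpow_const (p := a) (Or.inl hx0.ne'))
      hx.hasFDerivAt
  rw [hev.lineDeriv_eq, hder.differentiableAt.lineDeriv_eq_fderiv, hder.fderiv]
  have h1 : |fderiv ℝ (distBdry Ω) x v| ≤ ‖v‖ := by
    refine ((fderiv ℝ (distBdry Ω) x).le_opNorm v).trans ?_
    have := norm_fderiv_le_of_lipschitz ℝ (x₀ := x) hlip
    exact mul_le_of_le_one_left (norm_nonneg _) (by simpa using this)
  rw [_root_.smul_apply, smul_eq_mul, abs_mul, abs_mul, Real.rpow_sub_one hx0.ne',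
    abs_of_nonneg (by positivity : 0 ≤ distBdry Ω x ^ a / distBdry Ω x)]
  gcongr

/-! ### Gradient and Hessian of test functions -/

theorem gradient_apply_eq {n : ℕ} (u : E n → ℝ) (x : E n) (i : Fin n) :
    (gradient u x) i = fderiv ℝ u x (EuclideanSpace.single i (1:ℝ)) := by
  rw [← inner_gradient_left (𝕜 := ℝ), EuclideanSpace.inner_single_right]
  simp

theorem contDiff_gradient {n : ℕ} {u : E n → ℝ} (hu : ContDiff ℝ (⊤ : ℕ∞) u) :
    ContDiff ℝ (⊤ : ℕ∞) (gradient u) := by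
  rw [contDiff_euclidean]
  intro i
  simp only [gradient_apply_eq]
  exact (hu.fderiv_right (m := ((⊤ : ℕ∞) : WithTop ℕ∞)) (by simp)).clm_apply contDiff_const

theorem contDiff_partial {n : ℕ} {u : E n → ℝ} (hu : ContDiff ℝ (⊤ : ℕ∞) u) (i : Fin n) :
    ContDiff ℝ (⊤ : ℕ∞) (fun x => (gradient u x) i) :=
  (contDiff_euclidean.1 (contDiff_gradient hu)) i

theorem fderiv_partial {n : ℕ} {u : E n → ℝ} (hu : ContDiff ℝ (⊤ : ℕ∞) u) (i : Fin n)
    (x v : E n) : fderiv ℝ (fun x => (gradient u x) i) x v =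
      fderiv ℝ (fderiv ℝ u) x v (EuclideanSpace.single i (1:ℝ)) := by
  simp only [gradient_apply_eq]
  have hd : DifferentiableAt ℝ (fderiv ℝ u) x :=
    ((hu.fderiv_right (m := ((⊤ : ℕ∞) : WithTop ℕ∞)) (by simp)).differentiable (by simp)) x
  rw [fderiv_clm_apply hd (differentiableAt_const _)]
  simp

theorem fderiv_gradient_apply {n : ℕ} {u : E n → ℝ} (hu : ContDiff ℝ (⊤ : ℕ∞) u) (i : Fin n)
    (x v : E n) : (fderiv ℝ (gradient u) x v) i = fderiv ℝ (fun x => (gradient u x) i) x v := by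
  have hd : DifferentiableAt ℝ (gradient u) x := (contDiff_gradient hu).differentiable (by simp) x
  have h := (EuclideanSpace.proj i : E n →L[ℝ] ℝ).hasFDerivAt.comp x
    hd.hasFDerivAt
  have h2 : fderiv ℝ (fun x => (gradient u x) i) x = _ := h.fderiv
  rw [h2]
  rfl

theorem hessNormHS_nonneg {n : ℕ} (u : E n → ℝ) (x : E n) : 0 ≤ hessNormHS u x :=
  Real.sqrt_nonneg _

theorem hessNormHS_eq {n : ℕ} (u : E n → ℝ) (x : E n) : hessNormHS u x =
    Real.sqrt (∑ i : Fin n, ∑ j : Fin n, (fderiv ℝ (fderiv ℝ u) x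
      (EuclideanSpace.single i (1:ℝ)) (EuclideanSpace.single j (1:ℝ))) ^ 2) := by
  simp only [hessNormHS, iteratedFDeriv_two_apply]
  rfl

theorem continuous_hessNormHS {n : ℕ} {u : E n → ℝ} (hu : ContDiff ℝ (⊤ : ℕ∞) u) :
    Continuous (hessNormHS u) := by
  have h2 : Continuous (fderiv ℝ (fderiv ℝ u)) :=
    (hu.fderiv_right (m := ((⊤ : ℕ∞) : WithTop ℕ∞)) (by simp)).continuous_fderiv (by simp)
  have : hessNormHS u = _ := funext (hessNormHS_eq u)
  rw [this]
  fun_prop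

theorem norm_fderiv_gradient_le {n : ℕ} {u : E n → ℝ} (hu : ContDiff ℝ (⊤ : ℕ∞) u) (i : Fin n)
    (x : E n) :
    ‖fderiv ℝ (gradient u) x (EuclideanSpace.single i (1:ℝ))‖ ≤ hessNormHS u x := by
  rw [hessNormHS_eq, EuclideanSpace.norm_eq]
  apply Real.sqrt_le_sqrt
  simp only [fderiv_gradient_apply hu, fderiv_partial hu, Real.norm_eq_abs, sq_abs]
  exact Finset.single_le_sum (f := fun i => ∑ j : Fin n, (fderiv ℝ (fderiv ℝ u) x
      (EuclideanSpace.single i (1:ℝ)) (EuclideanSpace.single j (1:ℝ))) ^ 2)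
    (fun i _ => Finset.sum_nonneg fun j _ => sq_nonneg _) (Finset.mem_univ i)

theorem norm_gradient_partial_le {n : ℕ} {u : E n → ℝ} (hu : ContDiff ℝ (⊤ : ℕ∞) u) (i : Fin n)
    (x : E n) :
    ‖gradient (fun y => (gradient u y) i) x‖ ≤ hessNormHS u x := by
  rw [hessNormHS_eq, EuclideanSpace.norm_eq]
  apply Real.sqrt_le_sqrt
  simp only [gradient_apply_eq (fun y => (gradient u y) i), fderiv_partial hu, Real.norm_eq_abs,
    sq_abs]
  gcongr with k
  exact Finset.single_le_sum (f := fun j => (fderiv ℝ (fderiv ℝ u) x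
      (EuclideanSpace.single k (1:ℝ)) (EuclideanSpace.single j (1:ℝ))) ^ 2)
    (fun i _ => sq_nonneg _) (Finset.mem_univ i)

theorem tsupport_partial_subset {n : ℕ} (u : E n → ℝ) (i : Fin n) :
    tsupport (fun x => (gradient u x) i) ⊆ tsupport u := by
  refine closure_minimal (fun x hx => ?_) (isClosed_tsupport u)
  refine support_fderiv_subset ℝ (f := u) ?_
  intro h
  simp [gradient_apply_eq, h] at hx

theorem gradient_eq_zero_of_notMem {n : ℕ} {u : E n → ℝ} {x : E n} (hx : x ∉ tsupport u) :
    gradient u x = 0 := by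
  ext i
  exact image_eq_zero_of_notMem_tsupport (f := fun x => (gradient u x) i) fun h => hx (tsupport_partial_subset u i h)

theorem hessNormHS_eq_zero_of_notMem {n : ℕ} {u : E n → ℝ} {x : E n} (hx : x ∉ tsupport u) :
    hessNormHS u x = 0 := by
  have h : fderiv ℝ (fderiv ℝ u) x = 0 := by
    by_contra h
    exact hx (tsupport_fderiv_subset ℝ (support_fderiv_subset ℝ (f := fderiv ℝ u) h))
  simp [hessNormHS_eq, h]

theorem TestFun.partialDeriv {n : ℕ} {Ω : Set (E n)} {u : E n → ℝ} (hu : TestFun Ω u) (i : Fin n) :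
    TestFun Ω (fun x => (gradient u x) i) :=
  ⟨contDiff_partial hu.1 i, hu.2.1.mono' (subset_closure.trans (tsupport_partial_subset u i)),
    (tsupport_partial_subset u i).trans hu.2.2⟩

/-! ### Integration by parts -/

/-- Integration by parts in the direction `eᵢ`, moving the derivative off one factor `∂ᵢu` of
`reg M e (∇u) (∂ᵢu)² ψ`.  The term where it falls on `reg M e (∇u) ∂ᵢu` is controlled by `B₁`, the
term where it falls on the weight `ψ` by `B₂`. -/
theorem ibp_bound {M : ℝ → ℝ} (hN : IsNFunction M) {L : ℝ}
    (hdiff : ∀ l > (0:ℝ), DifferentiableAt ℝ M l)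
    (hder : ∀ l > (0:ℝ), |deriv M l| * l ≤ L * M l) {e : ℝ} (he : 0 < e) {n : ℕ}
    {u : E n → ℝ} (hu : ContDiff ℝ (⊤ : ℕ∞) u) (hc : HasCompactSupport u)
    {ψ : E n → ℝ} {D : NNReal} (hψ : LipschitzWith D ψ) (hψ0 : ∀ x ∈ tsupport u, 0 ≤ ψ x)
    {W : E n → ℝ} (i : Fin n)
    (hW : ∀ᵐ x, x ∈ tsupport u → |lineDeriv ℝ ψ x (EuclideanSpace.single i (1:ℝ))| ≤ W x)
    {B₁ B₂ : E n → ℝ} (hB₁ : IntegrableOn B₁ (tsupport u)) (hB₂ : IntegrableOn B₂ (tsupport u))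
    (h₁ : ∀ x ∈ tsupport u,
      (L + 3) * (reg M e (gradient u x) * hessNormHS u x * |u x|) * ψ x ≤ B₁ x)
    (h₂ : ∀ x ∈ tsupport u,
      W x * (reg M e (gradient u x) * |(gradient u x) i| * |u x|) ≤ B₂ x) :
    ∫ x in tsupport u, reg M e (gradient u x) * (gradient u x) i ^ 2 * ψ x ≤
      (∫ x in tsupport u, B₁ x) + ∫ x in tsupport u, B₂ x := by
  have hpos := hN.2.2.2.1
  set G := gradient u with hG
  set ei : E n := EuclideanSpace.single i (1:ℝ) with hei
  have hKc : IsCompact (tsupport u) := hc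
  have hGc := contDiff_gradient hu
  have hGd : Differentiable ℝ G := hGc.differentiable (by simp)
  have hGid : Differentiable ℝ (fun x => G x i) := (contDiff_partial hu i).differentiable (by simp)
  have hud : Differentiable ℝ u := hu.differentiable (by simp)
  have hrd : ∀ p : E n, DifferentiableAt ℝ (reg M e (n := n)) p :=
    fun p => (reg_differentiableAt hN hdiff hder he p).1
  have hrb : ∀ p : E n, ‖fderiv ℝ (reg M e (n := n)) p‖ * ‖p‖ ≤ (L + 2) * reg M e p :=
    fun p => (reg_differentiableAt hN hdiff hder he p).2
  have hr0 : ∀ p : E n, 0 ≤ reg M e p := fun p => reg_nonneg hpos he p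
  have hrc : Continuous (fun x => reg M e (G x)) :=
    (Differentiable.continuous (𝕜 := ℝ) (fun p => hrd p)).comp hGc.continuous
  have hkd : ∀ x, HasFDerivAt (fun x => reg M e (G x))
      ((fderiv ℝ (reg M e (n := n)) (G x)).comp (fderiv ℝ G x)) x := fun x =>
    (hrd (G x)).hasFDerivAt.comp x (hGd x).hasFDerivAt
  -- the function to which integration by parts is applied
  set g : E n → ℝ := fun x => u x * (reg M e (G x) * G x i) with hg
  have hgd : ∀ x, HasFDerivAt g
      (u x • (reg M e (G x) • fderiv ℝ (fun x => G x i) x +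
        G x i • ((fderiv ℝ (reg M e (n := n)) (G x)).comp (fderiv ℝ G x))) +
        (reg M e (G x) * G x i) • fderiv ℝ u x) x := fun x =>
    (hud x).hasFDerivAt.mul ((hkd x).mul (hGid x).hasFDerivAt)
  have hgdiff : Differentiable ℝ g := fun x => (hgd x).differentiableAt
  have hGi : ∀ x, |G x i| ≤ ‖G x‖ := fun x => PiLp.norm_apply_le (G x) i
  have hcoef : ∀ x, |G x i| * ‖fderiv ℝ (reg M e (n := n)) (G x)‖ ≤ (L + 2) * reg M e (G x) :=
    fun x => by
      refine le_trans ?_ (hrb (G x))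
      rw [mul_comm]
      exact mul_le_mul_of_nonneg_left (hGi x) (norm_nonneg _)
  have htg : tsupport g ⊆ tsupport u := closure_minimal (fun x hx => by
    by_contra h
    exact hx (by simp [hg, image_eq_zero_of_notMem_tsupport h])) (isClosed_tsupport u)
  have hgc : HasCompactSupport g := hKc.of_isClosed_subset (isClosed_tsupport g) htg
  obtain ⟨D', hgl⟩ : ∃ D', LipschitzWith D' g := by
    -- the derivative of `g` need not be continuous, but it has a continuous majorant
    have hcont : Continuous (fun x => |u x| * (reg M e (G x) * ‖fderiv ℝ (fun x => G x i) x‖ +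
        (L + 2) * reg M e (G x) * ‖fderiv ℝ G x‖) +
        |reg M e (G x) * G x i| * ‖fderiv ℝ u x‖) := by
      have c1 := hGc.continuous_fderiv (by simp)
      have c2 := (contDiff_partial hu i).continuous_fderiv (by simp)
      have c3 := hu.continuous_fderiv (by simp)
      have c4 := hu.continuous
      have c5 := (contDiff_partial hu i).continuous
      fun_prop
    obtain ⟨R, hR⟩ := hKc.exists_bound_of_continuousOn hcont.continuousOn
    refine ⟨R.toNNReal, lipschitzWith_of_nnnorm_fderiv_le hgdiff fun x => ?_⟩
    rw [← NNReal.coe_le_coe, coe_nnnorm]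
    by_cases hx : x ∈ tsupport u
    · refine le_trans ?_ (Real.le_coe_toNNReal R)
      refine le_trans ?_ ((le_abs_self _).trans (hR x hx))
      rw [(hgd x).fderiv]
      refine (norm_add_le _ _).trans ?_
      rw [norm_smul, norm_smul, Real.norm_eq_abs, Real.norm_eq_abs]
      refine add_le_add (mul_le_mul_of_nonneg_left ?_ (abs_nonneg _)) le_rfl
      refine (norm_add_le _ _).trans ?_
      rw [norm_smul, norm_smul, Real.norm_eq_abs, Real.norm_eq_abs, abs_of_nonneg (hr0 _)]
      refine add_le_add le_rfl ?_
      calc _ ≤ |G x i| * (‖fderiv ℝ (reg M e (n := n)) (G x)‖ * ‖fderiv ℝ G x‖) := by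
            exact mul_le_mul_of_nonneg_left (ContinuousLinearMap.opNorm_comp_le _ _) (abs_nonneg _)
        _ = |G x i| * ‖fderiv ℝ (reg M e (n := n)) (G x)‖ * ‖fderiv ℝ G x‖ := by ring
        _ ≤ _ := mul_le_mul_of_nonneg_right (hcoef x) (norm_nonneg _)
    · have h0 : fderiv ℝ g x = 0 := by
        by_contra h
        exact hx (htg (support_fderiv_subset ℝ (f := g) h))
      simp [h0]
  have hline : ∀ x, lineDeriv ℝ g x ei = u x * (reg M e (G x) * fderiv ℝ (fun x => G x i) x ei +
      G x i * fderiv ℝ (reg M e (n := n)) (G x) (fderiv ℝ G x ei)) +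
      reg M e (G x) * G x i ^ 2 := fun x => by
    rw [(hgdiff x).lineDeriv_eq_fderiv, (hgd x).fderiv]
    have : fderiv ℝ u x ei = G x i := (gradient_apply_eq u x i).symm
    simp only [add_apply, smul_apply, smul_eq_mul, ContinuousLinearMap.comp_apply, this]
    ring
  have hpart := hψ.integral_lineDeriv_mul_eq (μ := volume) hgl hgc ei
  rw [← setIntegral_eq_integral_of_forall_compl_eq_zero (s := tsupport u) (fun x hx => by
      simp [hg, image_eq_zero_of_notMem_tsupport hx]),
    ← setIntegral_eq_integral_of_forall_compl_eq_zero (s := tsupport u)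
      (f := fun x => lineDeriv ℝ g x (-ei) * ψ x) (fun x hx => by
        rw [lineDeriv_neg, hline]
        simp [image_eq_zero_of_notMem_tsupport hx, hG, gradient_eq_zero_of_notMem hx])] at hpart
  have hint : IntegrableOn (fun x => lineDeriv ℝ g x ei * ψ x) (tsupport u) :=
    ((hgl.locallyIntegrable_lineDeriv ei).integrableOn_isCompact hKc).mul_continuousOn
      hψ.continuous.continuousOn hKc
  have hb2 : |∫ x in tsupport u, lineDeriv ℝ ψ x ei * g x| ≤ ∫ x in tsupport u, B₂ x := by
    rw [← Real.norm_eq_abs]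
    refine norm_integral_le_of_norm_le hB₂ ?_
    rw [ae_restrict_iff' (isClosed_tsupport u).measurableSet]
    filter_upwards [hW] with x hx hxK
    refine le_trans ?_ (h₂ x hxK)
    rw [Real.norm_eq_abs, abs_mul]
    have : |g x| = reg M e (G x) * |G x i| * |u x| := by
      simp only [hg, abs_mul, abs_of_nonneg (hr0 (G x))]
      ring
    rw [this]
    have h3 := hr0 (G x)
    gcongr
    exact hx hxK
  have hneg : ∫ x in tsupport u, lineDeriv ℝ g x (-ei) * ψ x =
      - ∫ x in tsupport u, lineDeriv ℝ g x ei * ψ x := by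
    rw [← integral_neg]
    simp only [lineDeriv_neg, neg_mul]
  rw [hneg] at hpart
  rw [hpart, abs_neg] at hb2
  have hmain : ∫ x in tsupport u, reg M e (G x) * G x i ^ 2 * ψ x ≤
      ∫ x in tsupport u, (B₁ x + lineDeriv ℝ g x ei * ψ x) := by
    refine setIntegral_mono_on ?_ (hB₁.add hint) (isClosed_tsupport u).measurableSet ?_
    · refine ContinuousOn.integrableOn_compact hKc (Continuous.continuousOn ?_)
      have := (contDiff_partial hu i).continuous
      have := hψ.continuous
      fun_prop
    · intro x hx
      have hb := h₁ x hx
      have hp0 := hψ0 x hx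
      rw [hline]
      set T := reg M e (G x) * fderiv ℝ (fun x => G x i) x ei +
        G x i * fderiv ℝ (reg M e (n := n)) (G x) (fderiv ℝ G x ei) with hT
      have hH := norm_fderiv_gradient_le hu i x
      have hH1 : |fderiv ℝ (fun x => G x i) x ei| ≤ hessNormHS u x := by
        rw [← fderiv_gradient_apply hu]
        exact (PiLp.norm_apply_le _ i).trans hH
      have hTb : |T| ≤ (L + 3) * (reg M e (G x) * hessNormHS u x) := by
        refine (abs_add_le _ _).trans ?_
        rw [abs_mul, abs_mul, abs_of_nonneg (hr0 _)]
        have e1 := mul_le_mul_of_nonneg_left hH1 (hr0 (G x))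
        have e2 : |G x i| * |fderiv ℝ (reg M e (n := n)) (G x) (fderiv ℝ G x ei)| ≤
            (L + 2) * reg M e (G x) * hessNormHS u x := by
          calc _ ≤ |G x i| * (‖fderiv ℝ (reg M e (n := n)) (G x)‖ * ‖fderiv ℝ G x ei‖) := by
                gcongr
                exact (fderiv ℝ (reg M e (n := n)) (G x)).le_opNorm _
            _ = |G x i| * ‖fderiv ℝ (reg M e (n := n)) (G x)‖ * ‖fderiv ℝ G x ei‖ := by ring
            _ ≤ |G x i| * ‖fderiv ℝ (reg M e (n := n)) (G x)‖ * hessNormHS u x := by gcongr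
            _ ≤ _ := mul_le_mul_of_nonneg_right (hcoef x) (hessNormHS_nonneg u x)
        linarith
      have hTu : -(u x * T) ≤ (L + 3) * (reg M e (G x) * hessNormHS u x * |u x|) := by
        calc -(u x * T) ≤ |u x| * |T| := by rw [← abs_mul]; exact neg_le_abs _
          _ ≤ |u x| * ((L + 3) * (reg M e (G x) * hessNormHS u x)) := by gcongr
          _ = _ := by ring
      have := mul_le_mul_of_nonneg_right hTu hp0
      linarith
  rw [integral_add hB₁ hint] at hmain
  linarith [le_abs_self (∫ x in tsupport u, lineDeriv ℝ g x ei * ψ x)]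

/-! ### The modular inequality -/

/-- The inequality with explicit constants, on a domain where `δ > 0`. -/
theorem modular_bound {n : ℕ} (hn : 0 < n) (Ω : Set (E n)) (hΩo : IsOpen Ω)
    (hδ : ∀ x ∈ Ω, 0 < distBdry Ω x)
    (q a : ℝ) (hq : 1 < q)
    (C : ℝ)
    (hHardy : ∀ u : E n → ℝ, TestFun Ω u →
      ∫ x in Ω, (|u x| / distBdry Ω x) ^ q * distBdry Ω x ^ a ≤
        C * ∫ x in Ω, ‖gradient u x‖ ^ q * distBdry Ω x ^ a)
    (M Q : ℝ → ℝ) (hN : IsNFunction M) (hQ : IsNFunction Q)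
    {L : ℝ} (hL : 0 ≤ L) (hdiff : ∀ l > (0:ℝ), DifferentiableAt ℝ M l)
    (hder : ∀ l > (0:ℝ), |deriv M l| * l ≤ L * M l)
    (c : ℝ) (hc : 0 < c)
    (hY : ∀ u > (0:ℝ), ∀ v > (0:ℝ), ∀ w > (0:ℝ),
      M u / u ^ 2 * v * w ≤ M u + c * v ^ q + Q w)
    (u : E n → ℝ) (hu : TestFun Ω u) :
    ∫ x in Ω, M ‖gradient u x‖ * distBdry Ω x ^ a ≤
      c * (((L + 3) / (1 / (4 * n))) ^ q + (|a| / (1 / (4 * n))) ^ q * |C|) *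
        (∫ x in Ω, hessNormHS u x ^ q * distBdry Ω x ^ a) +
        ∫ x in Ω, Q |u x| * distBdry Ω x ^ a := by
  obtain ⟨hMc, -, hM0, hMpos, -, -⟩ := id hN
  obtain ⟨hQc, -, hQ0, hQpos, -, -⟩ := hQ
  obtain ⟨hus, hucs, huΩ⟩ := id hu
  set K := tsupport u with hK
  have hKc : IsCompact K := hucs
  have hKm : MeasurableSet K := (isClosed_tsupport u).measurableSet
  have hq0 : 0 < q := by linarith
  have hδK : ∀ x ∈ K, 0 < distBdry Ω x := fun x hx => hδ x (huΩ hx)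
  have hδc : Continuous (distBdry Ω) :=
    (Metric.lipschitz_infDist_pt (frontier Ω)).continuous
  have hwc : ContinuousOn (fun x => distBdry Ω x ^ a) K :=
    hδc.continuousOn.rpow_const fun x hx => Or.inl (hδK x hx).ne'
  have hGc : Continuous (gradient u) := (contDiff_gradient hus).continuous
  have hHc := continuous_hessNormHS hus
  have conv : ∀ f : E n → ℝ, (∀ x ∉ K, f x = 0) → ∫ x in Ω, f x = ∫ x in K, f x := fun f hf =>
    setIntegral_eq_of_subset_of_forall_sdiff_eq_zero hΩo.measurableSet huΩ fun x hx => hf x hx.2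
  have hG0 : ∀ x ∉ K, gradient u x = 0 := fun x hx => gradient_eq_zero_of_notMem hx
  have hH0 : ∀ x ∉ K, hessNormHS u x = 0 := fun x hx => hessNormHS_eq_zero_of_notMem hx
  have hu0 : ∀ x ∉ K, u x = 0 := fun x hx => image_eq_zero_of_notMem_tsupport hx
  obtain ⟨ψ, D, hψ, hψK, hψW⟩ := exists_lipschitz_weight Ω K hKc hδK a
  have hψ0 : ∀ x ∈ K, 0 ≤ ψ x := fun x hx => by
    rw [hψK x hx]; exact Real.rpow_nonneg (hδK x hx).le _
  rw [conv (fun x => M ‖gradient u x‖ * distBdry Ω x ^ a) fun x hx => by simp [hG0 x hx, hM0],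
    conv (fun x => hessNormHS u x ^ q * distBdry Ω x ^ a) fun x hx => by
      simp [hH0 x hx, Real.zero_rpow hq0.ne'],
    conv (fun x => Q |u x| * distBdry Ω x ^ a) fun x hx => by simp [hu0 x hx, hQ0]]
  -- integrability of all the densities involved
  have iM : IntegrableOn (fun x => M ‖gradient u x‖ * distBdry Ω x ^ a) K :=
    ((hMc.comp_continuous hGc.norm fun x => norm_nonneg _).continuousOn.mul
      hwc).integrableOn_compact hKc
  have iH : IntegrableOn (fun x => hessNormHS u x ^ q * distBdry Ω x ^ a) K :=
    ((hHc.rpow_const fun x => Or.inr hq0.le).continuousOn.mul hwc).integrableOn_compact hKc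
  have iQ : IntegrableOn (fun x => Q |u x| * distBdry Ω x ^ a) K :=
    ((hQc.comp_continuous hus.continuous.abs fun x => mem_Ici.2 (abs_nonneg _)).continuousOn.mul
      hwc).integrableOn_compact hKc
  have iP : ∀ i, IntegrableOn (fun x => (|gradient u x i| / distBdry Ω x) ^ q *
      distBdry Ω x ^ a) K := fun i => by
    refine ContinuousOn.integrableOn_compact hKc (ContinuousOn.mul ?_ hwc)
    refine ContinuousOn.rpow_const ?_ fun x hx => Or.inr hq0.le
    exact (contDiff_partial hus i).continuous.abs.continuousOn.div hδc.continuousOn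
      fun x hx => (hδK x hx).ne'
  have hIH : 0 ≤ ∫ x in K, hessNormHS u x ^ q * distBdry Ω x ^ a :=
    setIntegral_nonneg hKm fun x hx => mul_nonneg
      (Real.rpow_nonneg (hessNormHS_nonneg u x) _) (Real.rpow_nonneg (hδK x hx).le _)
  -- the Hardy inequality for the partial derivatives
  have hP : ∀ i, ∫ x in K, (|gradient u x i| / distBdry Ω x) ^ q * distBdry Ω x ^ a ≤
      |C| * ∫ x in K, hessNormHS u x ^ q * distBdry Ω x ^ a := fun i => by
    have hv := hHardy _ (hu.partialDeriv i)
    have hvc := (contDiff_gradient (contDiff_partial hus i)).continuous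
    rw [conv (fun x => (|gradient u x i| / distBdry Ω x) ^ q * distBdry Ω x ^ a) fun x hx => by
        simp [hG0 x hx, Real.zero_rpow hq0.ne'],
      conv (fun x => ‖gradient (fun y => gradient u y i) x‖ ^ q * distBdry Ω x ^ a) fun x hx => by
        rw [gradient_eq_zero_of_notMem fun h => hx (tsupport_partial_subset u i h)]
        simp [Real.zero_rpow hq0.ne']] at hv
    have h0 : 0 ≤ ∫ x in K, ‖gradient (fun y => gradient u y i) x‖ ^ q * distBdry Ω x ^ a :=
      setIntegral_nonneg hKm fun x hx => mul_nonneg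
        (Real.rpow_nonneg (norm_nonneg _) _) (Real.rpow_nonneg (hδK x hx).le _)
    have h1 : ∫ x in K, ‖gradient (fun y => gradient u y i) x‖ ^ q * distBdry Ω x ^ a ≤
        ∫ x in K, hessNormHS u x ^ q * distBdry Ω x ^ a := by
      refine setIntegral_mono_on ?_ iH hKm fun x hx => ?_
      · exact ((hvc.norm.rpow_const fun x => Or.inr hq0.le).continuousOn.mul
          hwc).integrableOn_compact hKc
      · have h2 := Real.rpow_nonneg (hδK x hx).le a
        have h3 := norm_gradient_partial_le hus i x
        gcongr
    calc _ ≤ _ := hv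
      _ ≤ |C| * _ := mul_le_mul_of_nonneg_right (le_abs_self C) h0
      _ ≤ _ := mul_le_mul_of_nonneg_left h1 (abs_nonneg C)
  have hn' : (0:ℝ) < n := by exact_mod_cast hn
  -- each of the `n` directions contributes `2 * ε` times the left-hand side, in total one half
  set ε : ℝ := 1 / (4 * n) with hε
  have hε0 : 0 < ε := by positivity
  set A₀ := ((L + 3) / ε) ^ q with hA₀
  set B₀ := (|a| / ε) ^ q with hB₀
  set IM := ∫ x in K, M ‖gradient u x‖ * distBdry Ω x ^ a with hIM
  set IH := ∫ x in K, hessNormHS u x ^ q * distBdry Ω x ^ a with hIHd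
  set IQ := ∫ x in K, Q |u x| * distBdry Ω x ^ a with hIQ
  have hB₀0 : 0 ≤ B₀ := by positivity
  have hA₀0 : 0 ≤ A₀ := by positivity
  have hdir : ∀ e > (0:ℝ), ∀ i,
      ∫ x in K, reg M e (gradient u x) * (gradient u x) i ^ 2 * ψ x ≤
        ε * (2 * IM + c * (A₀ + B₀ * |C|) * IH + 2 * IQ) := fun e he i => by
    have j₁ := ((iM.add (iH.const_mul (c * A₀))).add iQ).const_mul ε
    have j₂ := ((iM.add ((iP i).const_mul (c * B₀))).add iQ).const_mul ε
    have key := ibp_bound hN hdiff hder he hus hucs hψ hψ0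
      (W := fun x => |a| * (distBdry Ω x ^ a / distBdry Ω x)) i
      (by simpa using hψW (EuclideanSpace.single i (1:ℝ))) j₁ j₂
      (fun x hx => by
        have h := mul_le_mul_of_nonneg_right (reg_young hM0 hMpos hQpos hc hY he (gradient u x)
          (K := L + 3) (by linarith) hε0 (hessNormHS_nonneg u x) (abs_nonneg (u x))) (hψ0 x hx)
        refine h.trans (le_of_eq ?_)
        simp only [Pi.add_apply, hψK x hx, ← hA₀]
        ring)
      (fun x hx => by
        have hd := hδK x hx
        have h := mul_le_mul_of_nonneg_right (reg_young hM0 hMpos hQpos hc hY he (gradient u x)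
          (abs_nonneg a) hε0 (v := |gradient u x i| / distBdry Ω x)
          (by positivity) (abs_nonneg (u x))) (hψ0 x hx)
        refine le_trans (le_of_eq ?_) (h.trans (le_of_eq ?_))
        · simp only [hψK x hx]
          ring
        · simp only [Pi.add_apply, hψK x hx, ← hB₀]
          ring)
    refine key.trans ?_
    rw [integral_const_mul, integral_const_mul,
      integral_add' (iM.add (iH.const_mul (c * A₀))) iQ, integral_add' iM (iH.const_mul (c * A₀)),
      integral_add' (iM.add ((iP i).const_mul (c * B₀))) iQ,
      integral_add' iM ((iP i).const_mul (c * B₀)), integral_const_mul, integral_const_mul,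
      ← mul_add]
    refine mul_le_mul_of_nonneg_left ?_ hε0.le
    have := mul_le_mul_of_nonneg_left (hP i) (by positivity : 0 ≤ c * B₀)
    linarith
  have hreg : ∀ e > (0:ℝ), ∫ x in K, reg M e (gradient u x) * ‖gradient u x‖ ^ 2 * ψ x ≤
      (2 * IM + c * (A₀ + B₀ * |C|) * IH + 2 * IQ) / 4 := fun e he => by
    have hsum := Finset.sum_le_sum fun i (_ : i ∈ Finset.univ) => hdir e he i
    rw [← integral_finsetSum] at hsum
    · have hrw : ∀ x, ∑ i, reg M e (gradient u x) * (gradient u x) i ^ 2 * ψ x =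
          reg M e (gradient u x) * ‖gradient u x‖ ^ 2 * ψ x := fun x => by
        rw [EuclideanSpace.norm_sq_eq, Finset.mul_sum, Finset.sum_mul]
        simp
      simp only [hrw, Finset.sum_const, Finset.card_univ, Fintype.card_fin, nsmul_eq_mul] at hsum
      refine hsum.trans (le_of_eq ?_)
      rw [hε]
      field_simp
    · intro i _
      have hrc : Continuous (reg M e (n := n)) := Differentiable.continuous (𝕜 := ℝ)
        fun p => (reg_differentiableAt hN hdiff hder he p).1
      have h1 := hrc.comp hGc
      have h2 := (contDiff_partial hus i).continuous
      exact ((h1.mul (h2.pow 2)).mul hψ.continuous).continuousOn.integrableOn_compact hKc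
  have hlim : Tendsto (fun k : ℕ => ∫ x in K,
      reg M (1 / ((k:ℝ) + 1)) (gradient u x) * ‖gradient u x‖ ^ 2 * ψ x) atTop (nhds IM) := by
    refine tendsto_integral_of_dominated_convergence
      (fun x => M ‖gradient u x‖ * distBdry Ω x ^ a) (fun k => ?_) iM (fun k => ?_) ?_
    · have hrc : Continuous (reg M (1 / ((k:ℝ) + 1)) (n := n)) :=
        Differentiable.continuous (𝕜 := ℝ)
          fun p => (reg_differentiableAt hN hdiff hder Nat.one_div_pos_of_nat p).1
      exact (((hrc.comp hGc).mul (hGc.norm.pow 2)).mul hψ.continuous).aestronglyMeasurable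
    · filter_upwards [ae_restrict_mem hKm] with x hx
      have he : (0:ℝ) < 1 / ((k:ℝ) + 1) := Nat.one_div_pos_of_nat
      have h1 := reg_nonneg hMpos he (gradient u x)
      have h2 := hψ0 x hx
      rw [Real.norm_eq_abs, abs_of_nonneg (by positivity), ← hψK x hx]
      exact mul_le_mul_of_nonneg_right (reg_mul_sq_le hMpos he _) h2
    · filter_upwards [ae_restrict_mem hKm] with x hx
      rw [← hψK x hx]
      refine Tendsto.mul_const _ ?_
      rcases (norm_nonneg (gradient u x)).eq_or_lt with h0 | h0
      · simp [← h0, hM0]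
      have h1 : Tendsto (fun k : ℕ => ‖gradient u x‖ ^ 2 + 1 / ((k:ℝ) + 1)) atTop
          (nhds (‖gradient u x‖ ^ 2 + 0)) :=
        tendsto_one_div_add_atTop_nhds_zero_nat.const_add _
      have h2 := ((tendsto_const_nhds (x := M ‖gradient u x‖)).div h1 (by positivity)).mul_const
        (‖gradient u x‖ ^ 2)
      rw [add_zero, div_mul_cancel₀ _ (by positivity)] at h2
      exact h2
  have hle : IM ≤ (2 * IM + c * (A₀ + B₀ * |C|) * IH + 2 * IQ) / 4 :=
    le_of_tendsto' hlim fun k => hreg _ Nat.one_div_pos_of_nat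
  have : 0 ≤ c * (A₀ + B₀ * |C|) * IH := by positivity
  linarith

/-- Theorem 4.7(ii), modular part: weighted Orlicz Gagliardo–Nirenberg inequality
with the weight `δ(x)^a`. -/
theorem statement14 {n : ℕ} (Ω : Set (E n)) (hΩo : IsOpen Ω)
    (hΩb : Bornology.IsBounded Ω)
    (q a : ℝ) (hq : 1 < q) (ha : a < q - 1)
    (C : ℝ)
    (hHardy : ∀ u : E n → ℝ, TestFun Ω u →
      ∫ x in Ω, (|u x| / distBdry Ω x) ^ q * distBdry Ω x ^ a ≤
        C * ∫ x in Ω, ‖gradient u x‖ ^ q * distBdry Ω x ^ a)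
    (M Q : ℝ → ℝ) (hM : CondM M) (hMN : IsNFunction M) (hQ : IsNFunction Q)
    (c : ℝ) (hc : 0 < c)
    (hY : ∀ u > (0:ℝ), ∀ v > (0:ℝ), ∀ w > (0:ℝ),
      M u / u ^ 2 * v * w ≤ M u + c * v ^ q + Q w) :
    ∃ c' > (0:ℝ), ∀ u : E n → ℝ, TestFun Ω u →
      ∫ x in Ω, M ‖gradient u x‖ * distBdry Ω x ^ a ≤
        c' * (∫ x in Ω, hessNormHS u x ^ q * distBdry Ω x ^ a
          + ∫ x in Ω, Q |u x| * distBdry Ω x ^ a) := by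
  -- the right-hand side is `c' * ∫ (h + J)` with the constant `J = ∫ Q |u| δ ^ a`, because the
  -- first integral sign captures the whole sum; it equals `c' * (∫ h + |Ω| * J)`
  have hQpos := hQ.2.2.2.1
  have hδ0 : ∀ x, 0 ≤ distBdry Ω x := fun x => Metric.infDist_nonneg
  have hJ : ∀ u : E n → ℝ, 0 ≤ ∫ x in Ω, Q |u x| * distBdry Ω x ^ a := fun u =>
    integral_nonneg fun x => mul_nonneg (hQpos _ (abs_nonneg _)) (Real.rpow_nonneg (hδ0 x) _)
  have hH : ∀ (u : E n → ℝ) (x : E n), 0 ≤ hessNormHS u x ^ q * distBdry Ω x ^ a := fun u x =>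
    mul_nonneg (Real.rpow_nonneg (hessNormHS_nonneg u x) _) (Real.rpow_nonneg (hδ0 x) _)
  rcases Ω.eq_empty_or_nonempty with rfl | hne
  · exact ⟨1, one_pos, fun u _ => by simp⟩
  rcases Nat.eq_zero_or_pos n with rfl | hn
  · refine ⟨1, one_pos, fun u _ => ?_⟩
    have h0 : ∀ x : E 0, gradient u x = 0 := fun x => Subsingleton.elim _ _
    simp only [h0, norm_zero, hMN.2.2.1, zero_mul, integral_zero, one_mul]
    exact integral_nonneg fun x => add_nonneg (hH u x) (hJ u)
  have hfr : (frontier Ω).Nonempty := by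
    rw [nonempty_iff_ne_empty]
    intro h
    have : Nonempty (Fin n) := ⟨⟨0, hn⟩⟩
    rcases isClopen_iff.1 (isClopen_iff_frontier_eq_empty.2 h) with h | h
    · exact hne.ne_empty h
    · exact NormedSpace.unbounded_univ ℝ (E n) (h ▸ hΩb)
  have hδ : ∀ x ∈ Ω, 0 < distBdry Ω x := fun x hx =>
    (isClosed_frontier.notMem_iff_infDist_pos hfr).1 fun h => by
      rw [hΩo.frontier_eq] at h
      exact h.2 hx
  have hVfin : volume Ω ≠ ⊤ := hΩb.measure_lt_top.ne
  have hV : 0 < volume.real Ω := ENNReal.toReal_pos (hΩo.measure_pos volume hne).ne' hVfin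
  obtain ⟨L, hL, hdiff, hder⟩ := hM.exists_deriv_mul_le
  set A := c * (((L + 3) / (1 / (4 * n))) ^ q + (|a| / (1 / (4 * n))) ^ q * |C|) with hA
  have hA0 : 0 ≤ A := by positivity
  refine ⟨A + 1 / volume.real Ω, by positivity, fun u hu => ?_⟩
  refine (modular_bound hn Ω hΩo hδ q a hq C hHardy M Q hMN hQ hL hdiff hder c hc hY u hu).trans ?_
  rw [← hA]
  have hint : IntegrableOn (fun x => hessNormHS u x ^ q * distBdry Ω x ^ a) Ω := by
    have hδc : Continuous (distBdry Ω) :=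
      (Metric.lipschitz_infDist_pt (frontier Ω)).continuous
    have hK : IntegrableOn (fun x => hessNormHS u x ^ q * distBdry Ω x ^ a) (tsupport u) := by
      refine ContinuousOn.integrableOn_compact hu.2.1 (ContinuousOn.mul ?_ ?_)
      · exact ((continuous_hessNormHS hu.1).rpow_const fun x => Or.inr (by linarith)).continuousOn
      · exact hδc.continuousOn.rpow_const fun x hx => Or.inl (hδ x (hu.2.2 hx)).ne'
    refine IntegrableOn.of_forall_sdiff_eq_zero hK hΩo.measurableSet fun x hx => ?_
    rw [hessNormHS_eq_zero_of_notMem hx.2, Real.zero_rpow (by linarith), zero_mul]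
  have hconst : IntegrableOn (fun _ : E n => ∫ x in Ω, Q |u x| * distBdry Ω x ^ a) Ω :=
    integrableOn_const hVfin
  rw [integral_add hint hconst, setIntegral_const, smul_eq_mul]
  have hI : 0 ≤ ∫ x in Ω, hessNormHS u x ^ q * distBdry Ω x ^ a := integral_nonneg (hH u)
  have hJu := hJ u
  set I := ∫ x in Ω, hessNormHS u x ^ q * distBdry Ω x ^ a
  set J := ∫ x in Ω, Q |u x| * distBdry Ω x ^ a
  have h1 : (A + 1 / volume.real Ω) * (I + volume.real Ω * J) =
      A * I + J + (A * (volume.real Ω * J) + 1 / volume.real Ω * I) := by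
    field_simp
    ring
  rw [h1]
  have : 0 ≤ A * (volume.real Ω * J) + 1 / volume.real Ω * I := by positivity
  linarith
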